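/- Let F : ℝ → ℝ satisfy Assumption 1.2 with parameters κ ∈ (0,1/4) and ε : ℕ → ℝ. Then for every γ > 0 there exists a constant C = C(γ, F) > 0 such that for every k ∈ ℕ one has Σ_{m ≥ 1} m^k |ĉ_m(F)| ≤ C · exp(exp(γ k)). -/

import Mathlib

open MeasureTheory ProbabilityTheory Real Filter

/-- The standard Gaussian measure `π₁` on `ℝ`. -/
noncomputable def stdGaussian : Measure ℝ := gaussianReal 0 1

/-- The `m`-th probabilists' Hermite polynomial `He_m`, evaluated at `x`. -/
noncomputable def He (m : ℕ) (x : ℝ) : ℝ := Polynomial.aeval x (Polynomial.hermite m)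

/-- The normalised Hermite coefficients `ĉ_m(F)`. -/
noncomputable def hermiteCoeff (F : ℝ → ℝ) (m : ℕ) : ℝ :=
  (Real.sqrt (Nat.factorial m))⁻¹ * ∫ x, F x * He m x ∂stdGaussian

/-!
Gaussian integration by parts gives `∫ u He_{n+1} dπ₁ = ∫ u' He_n dπ₁`, hence
`ĉ_m(F^(n)) = √((m+n)(m+n-1)⋯(m+1)) ĉ_{m+n}(F)`. Since `‖He_m‖² = m!` in `L²(π₁)`, Cauchy–Schwarz
bounds every `|ĉ_m(G)|` by `‖G‖₂`. Taking `n = 2q` derivatives gains a factor of order `m^q`, so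
`m^q |ĉ_m(F)| ≤ (2q)^q (‖F‖₂ + ‖F^(2q)‖₂)`, the first norm covering the indices `m ≤ 2q`. With
`q = k + 2` the terms `m^k |ĉ_m(F)|` are dominated by a multiple of `m⁻²`, and the multiple grows
with `k` more slowly than any `exp (exp (γ k))`, because `n^n` and the norms `‖F^(n)‖₂` do.
A pointwise bound by `exp (κ y²)` is an `L²(π₁)` bound because `2κ < 1/2`.
-/

open Polynomial (aeval hermite derivative)
open scoped ENNReal NNReal Polynomial

section LpNorm

variable {α : Type*} [MeasurableSpace α] {μ : Measure α}

lemma lpNorm_two_eq_sqrt_integral_sq {f : α → ℝ} (hf : AEStronglyMeasurable f μ) :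
    lpNorm f 2 μ = √(∫ x, f x ^ 2 ∂μ) := by
  rw [lpNorm_eq_integral_norm_rpow_toReal two_ne_zero ENNReal.ofNat_ne_top hf, sqrt_eq_rpow]
  simp

lemma abs_integral_mul_le_lpNorm_mul_lpNorm {f g : α → ℝ} (hf : MemLp f 2 μ) (hg : MemLp g 2 μ) :
    |∫ x, f x * g x ∂μ| ≤ lpNorm f 2 μ * lpNorm g 2 μ := by
  have holder := integral_mul_norm_le_Lp_mul_Lq (μ := μ) HolderConjugate.two_two
    (by simpa using hf) (by simpa using hg)
  simp only [rpow_two, norm_eq_abs, sq_abs, ← sqrt_eq_rpow] at holder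
  calc |∫ x, f x * g x ∂μ| ≤ ∫ x, |f x| * |g x| ∂μ := by
        simpa only [abs_mul] using abs_integral_le_integral_abs (f := fun x => f x * g x)
    _ ≤ lpNorm f 2 μ * lpNorm g 2 μ := by
        rwa [lpNorm_two_eq_sqrt_integral_sq hf.1, lpNorm_two_eq_sqrt_integral_sq hg.1]

lemma lpNorm_le_mul_lpNorm_of_norm_le {E : Type*} [NormedAddCommGroup E] {p : ℝ≥0∞} {f : α → E}
    {g : α → ℝ} {c : ℝ} (hc : 0 ≤ c) (hg : MemLp g p μ) (h : ∀ x, ‖f x‖ ≤ c * g x) :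
    lpNorm f p μ ≤ c * lpNorm g p μ :=
  calc lpNorm f p μ ≤ lpNorm (c • g) p μ := lpNorm_mono_real (hg.const_smul c) h
    _ = c * lpNorm g p μ := by rw [lpNorm_const_smul, coe_nnnorm, norm_of_nonneg hc]

end LpNorm

section Gaussian

variable {m : ℝ} {v : ℝ≥0}

lemma hasDerivAt_gaussianPDFReal (m : ℝ) (v : ℝ≥0) (x : ℝ) :
    HasDerivAt (gaussianPDFReal m v) (-(x - m) / v * gaussianPDFReal m v x) x := by
  have hexponent : HasDerivAt (fun y : ℝ => -(y - m) ^ 2 / (2 * v)) (-(x - m) / v) x := by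
    refine ((((hasDerivAt_id x).sub_const m).pow 2).neg.div_const (2 * (v : ℝ))).congr_deriv ?_
    rw [← mul_div_mul_left (-(x - m)) (v : ℝ) two_ne_zero]
    simp only [id_eq, Nat.cast_ofNat]
    ring
  refine (hexponent.exp.const_mul (√(2 * π * v))⁻¹).congr_deriv ?_
  rw [gaussianPDFReal]
  ring

lemma integrable_gaussianReal_iff_integrable_smul {E : Type*} [NormedAddCommGroup E]
    [NormedSpace ℝ E] {f : ℝ → E} (hv : v ≠ 0) :
    Integrable f (gaussianReal m v) ↔ Integrable fun x => gaussianPDFReal m v x • f x := by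
  rw [gaussianReal_of_var_ne_zero m hv, integrable_withDensity_iff_integrable_smul'
    (measurable_gaussianPDF m v) (ae_of_all _ fun _ => gaussianPDF_lt_top)]
  simp only [toReal_gaussianPDF]

lemma integrable_exp_mul_sq_gaussianReal (hv : v ≠ 0) {a : ℝ} (ha : a < 1 / (2 * v)) :
    Integrable (fun x => exp (a * x ^ 2)) (gaussianReal 0 v) := by
  rw [integrable_gaussianReal_iff_integrable_smul hv]
  refine ((integrable_exp_neg_mul_sq (sub_pos.2 ha)).const_mul (√(2 * π * v))⁻¹).congr
    (ae_of_all _ fun x => ?_)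
  simp only [gaussianPDFReal, smul_eq_mul, mul_assoc, ← exp_add]
  ring_nf

variable {R : Type*} [CommSemiring R] [Algebra R ℝ]

lemma integrable_aeval_gaussianReal (P : R[X]) :
    Integrable (fun x => aeval x P) (gaussianReal m v) := by
  induction P using Polynomial.induction_on' with
  | add P Q hP hQ => simpa only [map_add] using! hP.add hQ
  | monomial n a =>
    have hpow : Integrable (fun x : ℝ => x ^ n) (gaussianReal m v) :=
      integrable_pow_of_mem_interior_integrableExpSet (X := id) (by simp) n
    simpa only [Polynomial.aeval_monomial] using hpow.const_mul (algebraMap R ℝ a)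

lemma memLp_two_aeval_gaussianReal (P : R[X]) :
    MemLp (fun x => aeval x P) 2 (gaussianReal m v) := by
  refine (memLp_two_iff_integrable_sq P.continuous_aeval.aestronglyMeasurable).2 ?_
  simp only [← map_pow]
  exact integrable_aeval_gaussianReal (P ^ 2)

lemma memLp_two_exp_mul_sq_stdGaussian {κ : ℝ} (hκ : κ < 1 / 4) :
    MemLp (fun x => exp (κ * x ^ 2)) 2 stdGaussian := by
  refine (memLp_two_iff_integrable_sq (by fun_prop)).2 ?_
  have hsq : Integrable (fun x => exp (2 * κ * x ^ 2)) stdGaussian :=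
    integrable_exp_mul_sq_gaussianReal one_ne_zero (by norm_num; linarith)
  simpa only [← exp_nat_mul, Nat.cast_ofNat, mul_assoc] using hsq

end Gaussian

section HermitePolynomial

lemma derivative_hermite_succ (n : ℕ) :
    derivative (hermite (n + 1)) = ((n : ℤ[X]) + 1) * hermite n := by
  induction n with
  | zero => simp [Polynomial.hermite_succ]
  | succ n ih =>
    rw [Polynomial.hermite_succ (n + 1), Polynomial.derivative_sub, Polynomial.derivative_mul,
      Polynomial.derivative_X, ih, Polynomial.derivative_mul, Polynomial.hermite_succ n]
    simp only [Polynomial.derivative_add, Polynomial.derivative_natCast, Polynomial.derivative_one]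
    push_cast
    ring

lemma hasDerivAt_He (n : ℕ) (x : ℝ) : HasDerivAt (He n) (x * He n x - He (n + 1) x) x := by
  refine ((hermite n).hasDerivAt_aeval x).congr_deriv ?_
  simp [He, Polynomial.hermite_succ]

lemma hasDerivAt_He_succ (n : ℕ) (x : ℝ) : HasDerivAt (He (n + 1)) ((n + 1) * He n x) x := by
  refine ((hermite (n + 1)).hasDerivAt_aeval x).congr_deriv ?_
  simp [He, derivative_hermite_succ, -Polynomial.hermite_succ]

lemma memLp_two_He (n : ℕ) : MemLp (He n) 2 stdGaussian :=
  memLp_two_aeval_gaussianReal (hermite n)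

lemma hasDerivAt_He_mul_gaussianPDFReal (n : ℕ) (x : ℝ) :
    HasDerivAt (fun y => He n y * gaussianPDFReal 0 1 y)
      (-(He (n + 1) x * gaussianPDFReal 0 1 x)) x := by
  refine ((hasDerivAt_He n x).mul (hasDerivAt_gaussianPDFReal 0 1 x)).congr_deriv ?_
  simp only [NNReal.coe_one]
  ring

lemma integral_mul_He_succ {u u' : ℝ → ℝ} (hderiv : ∀ x, HasDerivAt u (u' x) x)
    (hu : MemLp u 2 stdGaussian) (hu' : MemLp u' 2 stdGaussian) (n : ℕ) :
    ∫ x, u x * He (n + 1) x ∂stdGaussian = ∫ x, u' x * He n x ∂stdGaussian := by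
  have hintegrable {w : ℝ → ℝ} (hw : MemLp w 2 stdGaussian) (j : ℕ) :
      Integrable fun x => w x * (He j x * gaussianPDFReal 0 1 x) := by
    have hw_mul := (integrable_gaussianReal_iff_integrable_smul one_ne_zero).1
      (hw.integrable_mul (memLp_two_He j))
    exact hw_mul.congr (ae_of_all _ fun x => by simp only [smul_eq_mul, Pi.mul_apply]; ring)
  have hparts := integral_mul_deriv_eq_deriv_mul_of_integrable (fun x _ => hderiv x)
    (fun x _ => hasDerivAt_He_mul_gaussianPDFReal n x)
    ((hintegrable hu (n + 1)).neg.congr (ae_of_all _ fun x => by simp))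
    (hintegrable hu' n) (hintegrable hu n)
  simp only [mul_neg, integral_neg, neg_inj] at hparts
  simpa only [_root_.stdGaussian, integral_gaussianReal_eq_integral_smul one_ne_zero, smul_eq_mul,
    mul_comm (gaussianPDFReal 0 1 _), mul_assoc] using hparts

lemma integral_He_sq (n : ℕ) : ∫ x, He n x ^ 2 ∂stdGaussian = n.factorial := by
  induction n with
  | zero => simp [He, _root_.stdGaussian]
  | succ n ih =>
    calc ∫ x, He (n + 1) x ^ 2 ∂stdGaussian = ∫ x, (n + 1) * He n x * He n x ∂stdGaussian := by
          simp only [sq]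
          exact integral_mul_He_succ (hasDerivAt_He_succ n) (memLp_two_He _)
            ((memLp_two_He n).const_mul _) n
      _ = (n + 1) * ∫ x, He n x ^ 2 ∂stdGaussian := by simp only [mul_assoc, integral_const_mul, sq]
      _ = (n + 1).factorial := by rw [ih, Nat.factorial_succ]; push_cast; ring

lemma lpNorm_two_He (n : ℕ) : lpNorm (He n) 2 stdGaussian = √n.factorial := by
  rw [lpNorm_two_eq_sqrt_integral_sq (memLp_two_He n).1, integral_He_sq]

end HermitePolynomial

section HermiteCoefficient

lemma abs_hermiteCoeff_le_lpNorm {G : ℝ → ℝ} (hG : MemLp G 2 stdGaussian) (m : ℕ) :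
    |hermiteCoeff G m| ≤ lpNorm G 2 stdGaussian := by
  have hpos : 0 < √(m.factorial : ℝ) := sqrt_pos.2 (mod_cast m.factorial_pos)
  rw [hermiteCoeff, abs_mul, abs_of_pos (inv_pos.2 hpos), inv_mul_le_iff₀' hpos,
    ← lpNorm_two_He]
  exact abs_integral_mul_le_lpNorm_mul_lpNorm hG (memLp_two_He m)

lemma hermiteCoeff_deriv {u : ℝ → ℝ} (hu : Differentiable ℝ u) (hmem : MemLp u 2 stdGaussian)
    (hmem' : MemLp (deriv u) 2 stdGaussian) (m : ℕ) :
    hermiteCoeff (deriv u) m = √(m + 1) * hermiteCoeff u (m + 1) := by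
  rw [hermiteCoeff, hermiteCoeff,
    ← integral_mul_He_succ (fun x => (hu x).hasDerivAt) hmem hmem' m,
    Nat.factorial_succ, Nat.cast_mul, sqrt_mul (by positivity), Nat.cast_succ]
  field_simp

lemma hermiteCoeff_iteratedDeriv {F : ℝ → ℝ} {n : ℕ} (hF : ContDiff ℝ n F)
    (hmem : ∀ i ≤ n, MemLp (iteratedDeriv i F) 2 stdGaussian) (m : ℕ) :
    hermiteCoeff (iteratedDeriv n F) m =
      √((m + n).descFactorial n) * hermiteCoeff F (m + n) := by
  induction n generalizing m with
  | zero => simp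
  | succ n ih =>
    have hdiff : Differentiable ℝ (iteratedDeriv n F) :=
      hF.differentiable_iteratedDeriv n (mod_cast n.lt_succ_self)
    have hmem_succ := hmem (n + 1) le_rfl
    rw [iteratedDeriv_succ] at hmem_succ ⊢
    have hdesc : (m + (n + 1)).descFactorial (n + 1) = (m + 1) * (m + 1 + n).descFactorial n := by
      rw [Nat.descFactorial_succ, show m + (n + 1) = m + 1 + n by ring, Nat.add_sub_cancel]
    rw [hermiteCoeff_deriv hdiff (hmem n n.le_succ) hmem_succ,
      ih (hF.of_le (mod_cast n.le_succ)) (fun i hi => hmem i (hi.trans n.le_succ)), hdesc,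
      Nat.cast_mul, sqrt_mul (by positivity), Nat.cast_succ, mul_assoc, add_assoc, add_comm 1 n]

lemma pow_le_pow_mul_descFactorial {n p : ℕ} (h : n ≤ p) :
    p ^ n ≤ n ^ n * p.descFactorial n := by
  rcases n.eq_zero_or_pos with rfl | hn
  · simp
  have hle : p ≤ n * (p + 1 - n) := by
    obtain ⟨d, rfl⟩ := Nat.exists_eq_add_of_le h
    rw [add_assoc, Nat.add_sub_cancel_left]
    nlinarith
  calc p ^ n ≤ (n * (p + 1 - n)) ^ n := by gcongr
    _ = n ^ n * (p + 1 - n) ^ n := mul_pow _ _ _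
    _ ≤ n ^ n * p.descFactorial n := by gcongr; exact Nat.pow_sub_le_descFactorial p n

lemma pow_le_pow_mul_sqrt_descFactorial {q m : ℕ} (h : 2 * q ≤ m) :
    (m : ℝ) ^ q ≤ (2 * q : ℕ) ^ q * √(m.descFactorial (2 * q)) := by
  refine le_of_sq_le_sq ?_ (by positivity)
  rw [mul_pow, sq_sqrt (by positivity), ← pow_mul, ← pow_mul, mul_comm q 2]
  exact_mod_cast pow_le_pow_mul_descFactorial h

lemma pow_mul_abs_hermiteCoeff_le {F : ℝ → ℝ} {q : ℕ} (hF : ContDiff ℝ (2 * q : ℕ) F)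
    (hmem : ∀ i ≤ 2 * q, MemLp (iteratedDeriv i F) 2 stdGaussian) (m : ℕ) :
    (m : ℝ) ^ q * |hermiteCoeff F m| ≤
      (2 * q : ℕ) ^ q *
        (lpNorm F 2 stdGaussian + lpNorm (iteratedDeriv (2 * q) F) 2 stdGaussian) := by
  rcases le_total m (2 * q) with hm | hm
  · have hcoeff : |hermiteCoeff F m| ≤ lpNorm F 2 stdGaussian :=
      abs_hermiteCoeff_le_lpNorm (by simpa using hmem 0 (Nat.zero_le _)) m
    gcongr
    exact hcoeff.trans (le_add_of_nonneg_right lpNorm_nonneg)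
  · have hcoeff : √(m.descFactorial (2 * q)) * |hermiteCoeff F m| ≤
        lpNorm (iteratedDeriv (2 * q) F) 2 stdGaussian := by
      have h := abs_hermiteCoeff_le_lpNorm (hmem _ le_rfl) (m - 2 * q)
      rwa [hermiteCoeff_iteratedDeriv hF hmem, Nat.sub_add_cancel hm, abs_mul,
        abs_of_nonneg (sqrt_nonneg _)] at h
    calc (m : ℝ) ^ q * |hermiteCoeff F m|
        ≤ (2 * q : ℕ) ^ q * √(m.descFactorial (2 * q)) * |hermiteCoeff F m| := by
          gcongr
          exact pow_le_pow_mul_sqrt_descFactorial hm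
      _ ≤ (2 * q : ℕ) ^ q *
            (lpNorm F 2 stdGaussian + lpNorm (iteratedDeriv (2 * q) F) 2 stdGaussian) := by
          rw [mul_assoc]
          gcongr
          exact hcoeff.trans (le_add_of_nonneg_left lpNorm_nonneg)

end HermiteCoefficient

lemma summable_and_tsum_le_of_pow_add_two_mul_le {a : ℕ → ℝ} (ha : ∀ m, 0 ≤ a m) {k : ℕ} {M : ℝ}
    (hM : ∀ m : ℕ, ((m : ℝ) + 1) ^ (k + 2) * a m ≤ M) :
    Summable (fun m : ℕ => ((m : ℝ) + 1) ^ k * a m) ∧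
      ∑' m : ℕ, ((m : ℝ) + 1) ^ k * a m ≤ (∑' m : ℕ, 1 / ((m : ℝ) + 1) ^ 2) * M := by
  have hsq : Summable fun m : ℕ => 1 / ((m : ℝ) + 1) ^ 2 := by
    simpa using (summable_nat_add_iff 1).2 (summable_one_div_nat_pow.2 one_lt_two)
  have hle (m : ℕ) : ((m : ℝ) + 1) ^ k * a m ≤ 1 / ((m : ℝ) + 1) ^ 2 * M := by
    rw [one_div_mul_eq_div, le_div_iff₀ (by positivity)]
    calc ((m : ℝ) + 1) ^ k * a m * ((m : ℝ) + 1) ^ 2 = ((m : ℝ) + 1) ^ (k + 2) * a m := by ring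
      _ ≤ M := hM m
  have hsum : Summable fun m : ℕ => ((m : ℝ) + 1) ^ k * a m :=
    (hsq.mul_right M).of_nonneg_of_le (fun m => mul_nonneg (by positivity) (ha m)) hle
  exact ⟨hsum, (hsum.tsum_le_tsum hle (hsq.mul_right M)).trans_eq tsum_mul_right⟩

/-- Sequences of order at most `exp (exp (δ n))` for every `δ > 0`: the growth class in which both
the `L²` norms of the derivatives of `F` and the moments of its Hermite coefficients are measured.
Using `O` rather than an eventual inequality makes a bound by `C * exp (exp (δ n))` valid for
every `n`, not only for large `n`. -/
def SubDoubleExp (a : ℕ → ℝ) : Prop :=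
  ∀ δ > 0, a =O[atTop] fun n => exp (exp (δ * n))

lemma isBigO_exp_of_eventuallyLE {α : Type*} {l : Filter α} {f g : α → ℝ} (h : f ≤ᶠ[l] g) :
    (fun x => exp (f x)) =O[l] fun x => exp (g x) :=
  .of_bound' <| h.mono fun x hx => by simpa using hx

namespace SubDoubleExp

variable {a b : ℕ → ℝ}

lemma mono (hb : SubDoubleExp b) (hab : ∀ n, |a n| ≤ b n) : SubDoubleExp a :=
  fun δ hδ => (Asymptotics.IsBigO.of_norm_le hab).trans (hb δ hδ)

lemma add (ha : SubDoubleExp a) (hb : SubDoubleExp b) : SubDoubleExp fun n => a n + b n :=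
  fun δ hδ => (ha δ hδ).add (hb δ hδ)

lemma const (c : ℝ) : SubDoubleExp fun _ => c := by
  intro δ _
  refine (Asymptotics.isBigO_const_const c (exp_ne_zero 0) atTop).trans ?_
  exact isBigO_exp_of_eventuallyLE (.of_forall fun n => (exp_pos (δ * n)).le)

lemma mul (ha : SubDoubleExp a) (hb : SubDoubleExp b) : SubDoubleExp fun n => a n * b n := by
  intro δ hδ
  refine ((ha (δ / 2) (half_pos hδ)).mul (hb (δ / 2) (half_pos hδ))).trans ?_
  simp only [← exp_add]
  have hlarge : ∀ᶠ n : ℕ in atTop, 2 ≤ exp (δ / 2 * n) :=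
    (tendsto_exp_atTop.comp <| tendsto_natCast_atTop_atTop.const_mul_atTop
      (half_pos hδ)).eventually_ge_atTop 2
  refine isBigO_exp_of_eventuallyLE (hlarge.mono fun n hn => ?_)
  calc exp (δ / 2 * n) + exp (δ / 2 * n) = 2 * exp (δ / 2 * n) := (two_mul _).symm
    _ ≤ exp (δ / 2 * n) * exp (δ / 2 * n) := by gcongr
    _ = exp (δ * n) := by rw [← exp_add]; ring_nf

lemma comp (ha : SubDoubleExp a) {φ : ℕ → ℕ} (hφ : Tendsto φ atTop atTop)
    (hlinear : (fun k => (φ k : ℝ)) =O[atTop] fun k : ℕ => (k : ℝ)) :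
    SubDoubleExp fun k => a (φ k) := by
  intro δ hδ
  obtain ⟨c, hc, hφc⟩ := hlinear.exists_pos
  refine ((ha (δ / c) (div_pos hδ hc)).comp_tendsto hφ).trans <|
    isBigO_exp_of_eventuallyLE <| hφc.bound.mono fun k hk => exp_le_exp.2 ?_
  simp only [Real.norm_natCast] at hk
  calc δ / c * φ k ≤ δ / c * (c * k) := by gcongr
    _ = δ * k := by field_simp

lemma pow_self : SubDoubleExp fun n => (n : ℝ) ^ n := by
  intro δ hδ
  have hsq : ∀ᶠ n : ℕ in atTop, (n : ℝ) ^ 2 ≤ exp (δ * n) := by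
    have h := (isLittleO_pow_exp_pos_mul_atTop 2 hδ).comp_tendsto tendsto_natCast_atTop_atTop
    simpa using h.bound zero_lt_one
  refine .trans (.of_bound' <| .of_forall fun n => ?_) (isBigO_exp_of_eventuallyLE hsq)
  have hn : (n : ℝ) ≤ exp n := by linarith [add_one_le_exp (n : ℝ)]
  calc ‖(n : ℝ) ^ n‖ = (n : ℝ) ^ n := norm_of_nonneg (by positivity)
    _ ≤ exp n ^ n := by gcongr
    _ = ‖exp ((n : ℝ) ^ 2)‖ := by rw [← exp_nat_mul, ← sq, norm_of_nonneg (exp_pos _).le]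

lemma exp_exp_of_tendsto_div {ε : ℕ → ℝ} (hε : Tendsto (fun n : ℕ => ε n / n) atTop (nhds 0)) :
    SubDoubleExp fun n => exp (exp (ε n)) := by
  intro δ hδ
  refine isBigO_exp_of_eventuallyLE ?_
  filter_upwards [hε.eventually_lt_const hδ, eventually_gt_atTop 0] with n hn hn0
  exact exp_le_exp.2 ((div_lt_iff₀ (Nat.cast_pos.2 hn0)).1 hn).le

lemma exists_le (ha : SubDoubleExp a) {δ : ℝ} (hδ : 0 < δ) :
    ∃ C > 0, ∀ n : ℕ, a n ≤ C * exp (exp (δ * n)) := by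
  obtain ⟨C, hC, hle⟩ := Asymptotics.bound_of_isBigO_nat_atTop (ha δ hδ)
  exact ⟨C, hC, fun n => (le_abs_self _).trans <| by simpa using hle (exp_pos _).ne'⟩

lemma pow_mul_add_comp_two_mul_add_two (ha : SubDoubleExp a) :
    SubDoubleExp fun k => ((2 * (k + 2) : ℕ) : ℝ) ^ (k + 2) * (a 0 + a (2 * (k + 2))) := by
  have htendsto : Tendsto (fun k => 2 * (k + 2)) atTop atTop :=
    tendsto_atTop_mono (fun k => by simp only [id_eq]; omega) tendsto_id
  have hlinear : (fun k : ℕ => ((2 * (k + 2) : ℕ) : ℝ)) =O[atTop] fun k : ℕ => (k : ℝ) := by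
    refine .of_bound 6 ((eventually_ge_atTop 1).mono fun k hk => ?_)
    simp only [Real.norm_natCast]
    exact_mod_cast (by omega : 2 * (k + 2) ≤ 6 * k)
  have hpow : SubDoubleExp fun k => ((2 * (k + 2) : ℕ) : ℝ) ^ (k + 2) := by
    refine (pow_self.comp htendsto hlinear).mono fun k => ?_
    rw [abs_of_nonneg (by positivity)]
    exact pow_le_pow_right₀ (mod_cast (by omega : 1 ≤ 2 * (k + 2))) (by omega)
  exact hpow.mul ((const (a 0)).add (ha.comp htendsto hlinear))

lemma lpNorm_of_norm_le {α E : Type*} [MeasurableSpace α] {μ : Measure α} [NormedAddCommGroup E]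
    {p : ℝ≥0∞} {f : ℕ → α → E} {g : α → ℝ} (ha : SubDoubleExp a) (ha0 : ∀ n, 0 ≤ a n)
    (hg : MemLp g p μ) (hfg : ∀ n x, ‖f n x‖ ≤ a n * g x) :
    SubDoubleExp fun n => lpNorm (f n) p μ :=
  (ha.mul (const (lpNorm g p μ))).mono fun n => by
    rw [abs_of_nonneg lpNorm_nonneg]
    exact lpNorm_le_mul_lpNorm_of_norm_le (ha0 n) hg (hfg n)

end SubDoubleExp

theorem stmt8_general (F : ℝ → ℝ) (hF : ∀ n : ℕ, ContDiff ℝ n F)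
    (hmem : ∀ n, MemLp (iteratedDeriv n F) 2 stdGaussian)
    (hgrowth : SubDoubleExp fun n => lpNorm (iteratedDeriv n F) 2 stdGaussian) :
    ∀ γ > (0 : ℝ), ∃ C > 0, ∀ k : ℕ,
      Summable (fun m : ℕ => ((m : ℝ) + 1) ^ k * |hermiteCoeff F (m + 1)|) ∧
      ∑' m : ℕ, ((m : ℝ) + 1) ^ k * |hermiteCoeff F (m + 1)|
        ≤ C * Real.exp (Real.exp (γ * k)) := by
  intro γ hγ
  obtain ⟨C, hC, hle⟩ :=
    ((SubDoubleExp.const (∑' m : ℕ, 1 / ((m : ℝ) + 1) ^ 2)).mul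
      hgrowth.pow_mul_add_comp_two_mul_add_two).exists_le hγ
  refine ⟨C, hC, fun k => ?_⟩
  have hterm (m : ℕ) := pow_mul_abs_hermiteCoeff_le (hF (2 * (k + 2))) (fun i _ => hmem i) (m + 1)
  obtain ⟨hsum, htsum⟩ := summable_and_tsum_le_of_pow_add_two_mul_le
    (fun m => abs_nonneg (hermiteCoeff F (m + 1))) (by simpa only [Nat.cast_succ] using hterm)
  exact ⟨hsum, htsum.trans (by simpa only [iteratedDeriv_zero] using hle k)⟩

theorem stmt8 (κ : ℝ) (hκ : κ ∈ Set.Ioo (0 : ℝ) (1 / 4)) (ε : ℕ → ℝ)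
    (hε : Tendsto (fun n : ℕ => ε n / n) atTop (nhds 0))
    (F : ℝ → ℝ) (hF : ∀ n : ℕ, ContDiff ℝ n F)
    (hbound : ∀ (n : ℕ) (y : ℝ),
      |iteratedDeriv n F y| ≤ Real.exp (Real.exp (ε n)) * Real.exp (κ * y ^ 2)) :
    ∀ γ > (0 : ℝ), ∃ C > 0, ∀ k : ℕ,
      Summable (fun m : ℕ => ((m : ℝ) + 1) ^ k * |hermiteCoeff F (m + 1)|) ∧
      ∑' m : ℕ, ((m : ℝ) + 1) ^ k * |hermiteCoeff F (m + 1)|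
        ≤ C * Real.exp (Real.exp (γ * k)) := by
  have hweight := memLp_two_exp_mul_sq_stdGaussian hκ.2
  exact stmt8_general F hF
    (fun n => hweight.of_le_mul ((hF n).continuous_iteratedDeriv n le_rfl).aestronglyMeasurable
      (.of_forall fun y => by simpa using hbound n y))
    ((SubDoubleExp.exp_exp_of_tendsto_div hε).lpNorm_of_norm_le (fun _ => (exp_pos _).le) hweight
      hbound)
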